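/- Let t, s > 0 with t ≠ s, and for λ ∈ (−π, 0) set a(t,s;λ) = (2/√(π²−λ²)) · (√(ts)/(s²−t²)) · sin( k(−λ) · ln(t/s) ), where k(μ) = π⁻¹ ln( (π+√(π²−μ²))/μ ) for μ ∈ (0,π]. Then there exist δ > 0 and a constant C = C(t,s) > 0 such that for all λ ∈ (−δ, 0): | a(t,s;λ) − (2/√(π²−λ²)) · (√(ts)/(t²−s²)) · sin( π⁻¹ ln( (−λ)/(2π) ) · ln(t/s) ) | ≤ C λ². In particular |k(−λ) − π⁻¹ ln( 2π/(−λ) )| = O(λ²) as λ → 0⁻. -/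

import Mathlib

/-!
With `r = √(π² − λ²)` one has `k(−λ) − π⁻¹ ln(2π/(−λ)) = π⁻¹ ln((π + r)/(2π))`, whose argument lies
in `(0, 1]`; hence `1 − 1/x ≤ ln x ≤ 0` bounds its modulus by `(π − r)/(π + r) = λ²/(π + r)² ≤ λ²`
(`abs_kfun_neg_sub_le`). Flipping the signs of both `t² − s²` and of `ln((−λ)/(2π))` turns the
difference of kernels into a bounded prefactor times a difference of two sines, and the sine is
1-Lipschitz.
-/

open MeasureTheory Set

noncomputable section

/-- `k(μ) = π⁻¹ ln((π + √(π²−μ²))/μ)` for `μ ∈ (0, π]`. -/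
def kfun (lam : ℝ) : ℝ :=
  Real.pi⁻¹ * Real.log ((Real.pi + Real.sqrt (Real.pi ^ 2 - lam ^ 2)) / lam)

/-- The kernel `a(t,s;λ)` of `A(λ)` in `(C − λ)⁻¹ = −λ⁻¹(I + A(λ))` for `λ ∈ (−π, 0)`. -/
def akerNeg (t s lam : ℝ) : ℝ :=
  2 / Real.sqrt (Real.pi ^ 2 - lam ^ 2) * (Real.sqrt (t * s) / (s ^ 2 - t ^ 2)) *
    Real.sin (kfun (-lam) * Real.log (t / s))

/-- For `|λ| < 1` the root stays away from zero, so the prefactor `2/√(π²−λ²)` is bounded. -/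
lemma one_le_sqrt_pi_sq_sub {lam : ℝ} (h1 : -1 < lam) (h2 : lam < 0) :
    1 ≤ Real.sqrt (Real.pi ^ 2 - lam ^ 2) := by
  rw [Real.one_le_sqrt]
  nlinarith [Real.pi_gt_three]

lemma abs_kfun_neg_sub_le {lam : ℝ} (h1 : -1 < lam) (h2 : lam < 0) :
    |kfun (-lam) - Real.pi⁻¹ * Real.log (2 * Real.pi / (-lam))| ≤ lam ^ 2 := by
  have hpi := Real.pi_gt_three
  have hr1 := one_le_sqrt_pi_sq_sub h1 h2
  have hrsq : Real.sqrt (Real.pi ^ 2 - lam ^ 2) ^ 2 = Real.pi ^ 2 - lam ^ 2 :=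
    Real.sq_sqrt (by nlinarith)
  unfold kfun
  rw [neg_sq]
  set r := Real.sqrt (Real.pi ^ 2 - lam ^ 2)
  have hrpi : r ≤ Real.pi := by nlinarith [sq_nonneg lam]
  have hlam : 0 < -lam := by linarith
  have hx : 0 < (Real.pi + r) / (2 * Real.pi) := by positivity
  have hdiff : Real.pi⁻¹ * Real.log ((Real.pi + r) / (-lam)) -
      Real.pi⁻¹ * Real.log (2 * Real.pi / (-lam)) =
      Real.pi⁻¹ * Real.log ((Real.pi + r) / (2 * Real.pi)) := by
    rw [Real.log_div (by positivity) hlam.ne', Real.log_div (by positivity) hlam.ne',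
      Real.log_div (by positivity) (by positivity)]
    ring
  have hle : Real.log ((Real.pi + r) / (2 * Real.pi)) ≤ 0 :=
    Real.log_nonpos hx.le ((div_le_one (by positivity)).2 (by linarith))
  have hge := Real.one_sub_inv_le_log_of_pos hx
  have hinv : ((Real.pi + r) / (2 * Real.pi))⁻¹ - 1 ≤ lam ^ 2 := by
    rw [inv_div, div_sub_one (by positivity), div_le_iff₀ (by positivity)]
    -- `λ² = (π − r)(π + r)` and `π + r ≥ 1`
    have hfac : lam ^ 2 = (Real.pi - r) * (Real.pi + r) := by linarith
    rw [hfac]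
    nlinarith [mul_nonneg (sub_nonneg.2 hrpi) (show 0 ≤ (Real.pi + r) ^ 2 - 1 by nlinarith)]
  rw [hdiff, abs_mul, abs_of_nonpos hle, abs_of_pos (by positivity)]
  have hpi1 : Real.pi⁻¹ ≤ 1 := inv_le_one_of_one_le₀ (by linarith)
  calc Real.pi⁻¹ * -Real.log ((Real.pi + r) / (2 * Real.pi))
      ≤ 1 * -Real.log ((Real.pi + r) / (2 * Real.pi)) := by gcongr; linarith
    _ ≤ lam ^ 2 := by linarith

/-- Oscillatory asymptotics of the kernel `a(t,s;λ)` as `λ → 0⁻`, with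
error `O(λ²)`; in particular `k(−λ) = π⁻¹ ln(2π/(−λ)) + O(λ²)`. -/
theorem aker_asymptotics_at_zero (t s : ℝ) (ht : 0 < t) (hs : 0 < s) (hts : t ≠ s) :
    (∃ δ : ℝ, 0 < δ ∧ ∃ C : ℝ, 0 < C ∧ ∀ lam : ℝ, -δ < lam → lam < 0 →
      |akerNeg t s lam -
          2 / Real.sqrt (Real.pi ^ 2 - lam ^ 2) * (Real.sqrt (t * s) / (t ^ 2 - s ^ 2)) *
            Real.sin (Real.pi⁻¹ * Real.log (-lam / (2 * Real.pi)) * Real.log (t / s))|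
        ≤ C * lam ^ 2) ∧
    (∃ δ : ℝ, 0 < δ ∧ ∃ C : ℝ, 0 < C ∧ ∀ lam : ℝ, -δ < lam → lam < 0 →
      |kfun (-lam) - Real.pi⁻¹ * Real.log (2 * Real.pi / (-lam))| ≤ C * lam ^ 2) := by
  refine ⟨⟨1, one_pos, 2 * |Real.sqrt (t * s) / (s ^ 2 - t ^ 2)| * |Real.log (t / s)| + 1,
    by positivity, fun lam h1 h2 => ?_⟩, 1, one_pos, 1, one_pos, fun lam h1 h2 => by
      simpa using abs_kfun_neg_sub_le h1 h2⟩
  have hr1 := one_le_sqrt_pi_sq_sub h1 h2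
  have hk := abs_kfun_neg_sub_le h1 h2
  have hlog : Real.log (-lam / (2 * Real.pi)) = -Real.log (2 * Real.pi / (-lam)) := by
    rw [← Real.log_inv, inv_div]
  have hden : Real.sqrt (t * s) / (t ^ 2 - s ^ 2) = -(Real.sqrt (t * s) / (s ^ 2 - t ^ 2)) := by
    rw [← neg_sub (s ^ 2), div_neg]
  unfold akerNeg
  rw [hlog, hden, mul_neg Real.pi⁻¹, neg_mul (Real.pi⁻¹ * _), Real.sin_neg]
  set r := Real.sqrt (Real.pi ^ 2 - lam ^ 2)
  set B := Real.sqrt (t * s) / (s ^ 2 - t ^ 2)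
  set l := Real.log (t / s)
  set L := Real.pi⁻¹ * Real.log (2 * Real.pi / (-lam))
  have hsin : |Real.sin (kfun (-lam) * l) - Real.sin (L * l)| ≤ lam ^ 2 * |l| := by
    refine (Real.abs_sin_sub_sin_le _ _).trans ?_
    rw [← sub_mul, abs_mul]
    gcongr
  have h2r : |2 / r| ≤ 2 := by
    rw [abs_of_pos (by positivity)]
    exact div_le_self zero_le_two hr1
  calc |2 / r * B * Real.sin (kfun (-lam) * l) - 2 / r * -B * -Real.sin (L * l)|
      = |2 / r| * |B| * |Real.sin (kfun (-lam) * l) - Real.sin (L * l)| := by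
        rw [← abs_mul, ← abs_mul]
        ring_nf
    _ ≤ 2 * |B| * (lam ^ 2 * |l|) := by gcongr
    _ ≤ (2 * |B| * |l| + 1) * lam ^ 2 := by nlinarith [sq_nonneg lam]
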